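/- Let R ≥ 1 be an integer. For k = 2, the matrix integral satisfies: I_2(n;R) = C(n + 3, 3) for all integers n with 0 ≤ n ≤ R, and I_2(n;R) = C(2R − n + 3, 3) for all integers n with R < n < 2R. -/

import Mathlib

open MeasureTheory Polynomial

noncomputable instance (R : ℕ) : MeasurableSpace (Matrix.unitaryGroup (Fin R) ℂ) := borel _
instance (R : ℕ) : BorelSpace (Matrix.unitaryGroup (Fin R) ℂ) := ⟨rfl⟩

/-- The trace of the `j`-th exterior power of `θ`, i.e. the coefficient of `T^j` in
`det(I + T·θ)`. -/
noncomputable def extPowTrace (R : ℕ) (θ : Matrix.unitaryGroup (Fin R) ℂ) (j : ℕ) : ℂ :=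
  ((1 + (X : ℂ[X]) • (θ : Matrix (Fin R) (Fin R) ℂ).map C).det).coeff j

/-- The matrix integral `I_k(n;R)`: the integral over the unitary group `U(R)` of
`|∑_{n₁+⋯+n_k=n} ∏ᵢ Tr(Λ^{nᵢ} θ)|²`, with respect to the measure `μ` (which in the
theorems below is assumed to be the Haar probability measure). The summands with some
`nᵢ > R` vanish, since `det(I + T·θ)` has degree `R`. -/
noncomputable def matrixIntegral (k n R : ℕ)
    (μ : Measure (Matrix.unitaryGroup (Fin R) ℂ)) : ℝ :=
  ∫ θ, ‖∑ x ∈ Finset.Nat.antidiagonalTuple k n, ∏ i, extPowTrace R θ (x i)‖ ^ 2 ∂μ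

/-- Two functions whose fibres have the same cardinalities differ by a permutation. -/
lemma exists_perm_comp_eq_of_card_fiber_eq {α β : Type*} [Fintype α] [DecidableEq β] {f g : α → β}
    (h : ∀ b, Fintype.card {a // f a = b} = Fintype.card {a // g a = b}) :
    ∃ σ : Equiv.Perm α, g ∘ σ = f := by
  let e (b : β) : {a // f a = b} ≃ {a // g a = b} := Fintype.equivOfCardEq (h b)
  refine ⟨(Equiv.sigmaFiberEquiv f).symm.trans
    ((Equiv.sigmaCongrRight e).trans (Equiv.sigmaFiberEquiv g)), ?_⟩
  funext a
  exact (e (f a) ⟨a, rfl⟩).2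

/-- The number of functions `Fin n → α` fixed by precomposition with `σ`. -/
def cardFixedFun (α : Type*) [Fintype α] [DecidableEq α] {n : ℕ} (σ : Equiv.Perm (Fin n)) : ℕ :=
  Fintype.card {w : Fin n → α // w ∘ σ = w}

/-- The multiset of values of a function on `Fin n`. -/
def symOfFun {α : Type*} {n : ℕ} (w : Fin n → α) : Sym α n :=
  ⟨Finset.univ.val.map w, by simp⟩

lemma symOfFun_surjective {α : Type*} {n : ℕ} :
    Function.Surjective (symOfFun : (Fin n → α) → Sym α n) := by
  rintro ⟨m, hm⟩
  induction m using Quotient.inductionOn with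
  | h l =>
    have hl : l.length = n := by simpa using hm
    subst hl
    refine ⟨l.get, Subtype.ext ?_⟩
    simp [symOfFun]

lemma symOfFun_eq_iff {α : Type*} [DecidableEq α] {n : ℕ} {v w : Fin n → α} :
    symOfFun v = symOfFun w ↔ ∃ σ : Equiv.Perm (Fin n), w ∘ σ = v := by
  constructor
  · intro h
    apply exists_perm_comp_eq_of_card_fiber_eq
    intro b
    have h' := congrArg (Multiset.count b) (congrArg Subtype.val h)
    simp only [symOfFun, Multiset.count_map] at h'
    simp only [Fintype.card_subtype, eq_comm (b := b)]
    exact h'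
  · rintro ⟨σ, rfl⟩
    apply Subtype.ext
    simp only [symOfFun]
    rw [← Multiset.map_map]
    congr 1
    simp

lemma sum_cardFixedFun (α : Type*) [Fintype α] [DecidableEq α] (n : ℕ) :
    ∑ σ : Equiv.Perm (Fin n), cardFixedFun α σ = (Fintype.card α).multichoose n * n.factorial := by
  classical
  let G := (Equiv.Perm (Fin n))ᵈᵐᵃ
  let _ : Fintype G := Fintype.ofEquiv _ DomMulAct.mk
  let Ω := Quotient (MulAction.orbitRel G (Fin n → α))
  have key := MulAction.sum_card_fixedBy_eq_card_orbits_mul_card_group G (Fin n → α)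
  have e : Ω ≃ Sym α n := by
    refine Equiv.ofBijective (Quotient.lift symOfFun ?_) ⟨?_, ?_⟩
    · rintro v w ⟨g, hg⟩
      exact symOfFun_eq_iff.2 ⟨DomMulAct.mk.symm g, hg⟩
    · rintro ⟨v⟩ ⟨w⟩ h
      obtain ⟨σ, hσ⟩ := symOfFun_eq_iff.1 h
      exact Quotient.sound ⟨DomMulAct.mk σ, hσ⟩
    · intro m
      obtain ⟨w, hw⟩ := symOfFun_surjective m
      exact ⟨⟦w⟧, hw⟩
  have hG : Fintype.card G = n.factorial := by
    rw [← Fintype.card_congr (DomMulAct.mk : Equiv.Perm (Fin n) ≃ G), Fintype.card_perm,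
      Fintype.card_fin]
  rw [Fintype.card_congr e, Sym.card_sym_eq_multichoose, hG] at key
  rw [← key]
  refine Fintype.sum_equiv DomMulAct.mk _ _ fun σ => ?_
  exact Fintype.card_congr (Equiv.refl _)

lemma cardFixedFun_conj (α : Type*) [Fintype α] [DecidableEq α] {n : ℕ}
    (ρ σ : Equiv.Perm (Fin n)) : cardFixedFun α (ρ * σ * ρ⁻¹) = cardFixedFun α σ := by
  refine Fintype.card_congr ((Equiv.arrowCongr ρ.symm (Equiv.refl α)).subtypeEquiv fun w => ?_)
  simp only [funext_iff, Function.comp_apply, Equiv.arrowCongr_apply, Equiv.coe_refl, id]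
  constructor
  · intro h s
    simpa using h (ρ s)
  · intro h s
    simpa using h (ρ⁻¹ s)

lemma cardFixedFun_prod (α β : Type*) [Fintype α] [DecidableEq α] [Fintype β] [DecidableEq β]
    {n : ℕ} (σ : Equiv.Perm (Fin n)) :
    cardFixedFun (α × β) σ = cardFixedFun α σ * cardFixedFun β σ := by
  rw [cardFixedFun, cardFixedFun, cardFixedFun, ← Fintype.card_prod]
  refine Fintype.card_congr ((Equiv.subtypeEquiv (Equiv.arrowProdEquivProdArrow _ _ _)
    (q := fun p : (Fin n → α) × (Fin n → β) => p.1 ∘ σ = p.1 ∧ p.2 ∘ σ = p.2)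
    fun w => ?_).trans (Equiv.subtypeProdEquivProd (p := fun v : Fin n → α => v ∘ σ = v)
      (q := fun v : Fin n → β => v ∘ σ = v)))
  simp [funext_iff, Prod.ext_iff, forall_and, Equiv.arrowProdEquivProdArrow]

/-- The `n`-th tensor power of a matrix. -/
def tensorPow {ι : Type*} (n : ℕ) (A : Matrix ι ι ℂ) : Matrix (Fin n → ι) (Fin n → ι) ℂ :=
  Matrix.of fun I J => ∏ s, A (I s) (J s)

section
variable {ι : Type*} {n : ℕ}

lemma tensorPow_mul [Fintype ι] (A B : Matrix ι ι ℂ) :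
    tensorPow n (A * B) = tensorPow n A * tensorPow n B := by
  ext I J
  simp only [tensorPow, Matrix.of_apply, Matrix.mul_apply, Finset.prod_univ_sum,
    Fintype.piFinset_univ, Finset.prod_mul_distrib]

lemma tensorPow_diagonal [DecidableEq ι] (d : ι → ℂ) :
    tensorPow n (Matrix.diagonal d) = Matrix.diagonal fun I => ∏ s, d (I s) := by
  ext I J
  by_cases h : I = J
  · subst h; simp [tensorPow]
  · obtain ⟨s, hs⟩ := Function.ne_iff.1 h
    rw [Matrix.diagonal_apply_ne _ h]
    exact Finset.prod_eq_zero (Finset.mem_univ s) (Matrix.diagonal_apply_ne _ hs)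

lemma tensorPow_one [DecidableEq ι] : tensorPow n (1 : Matrix ι ι ℂ) = 1 := by
  rw [← Matrix.diagonal_one, tensorPow_diagonal]
  simp [← Matrix.diagonal_one]

lemma tensorPow_conjTranspose (A : Matrix ι ι ℂ) :
    tensorPow n A.conjTranspose = (tensorPow n A).conjTranspose := by
  ext I J
  simp [tensorPow]

lemma tensorPow_comp_perm (A : Matrix ι ι ℂ) (I J : Fin n → ι) (σ : Equiv.Perm (Fin n)) :
    tensorPow n A (I ∘ σ) (J ∘ σ) = tensorPow n A I J :=
  Equiv.prod_comp σ fun s => A (I s) (J s)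

lemma prod_update_one_eq_pow [DecidableEq ι] (I : Fin n → ι) (r : ι) (z : ℂ) :
    ∏ s, Function.update (fun _ => (1 : ℂ)) r z (I s) = z ^ Fintype.card {s // I s = r} := by
  simp [Function.update_apply, Finset.prod_ite, Fintype.card_subtype]

variable [Fintype ι] [DecidableEq ι]

/-- `C` lies in the commutant of the unitary group acting on the tensor power. -/
def InCommutant (C : Matrix (Fin n → ι) (Fin n → ι) ℂ) : Prop :=
  ∀ U ∈ Matrix.unitaryGroup ι ℂ, Commute C (tensorPow n U)

lemma diagonal_mem_unitaryGroup {d : ι → ℂ} (hd : ∀ i, ‖d i‖ = 1) :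
    Matrix.diagonal d ∈ Matrix.unitaryGroup ι ℂ := by
  rw [Matrix.mem_unitaryGroup_iff, Matrix.star_eq_conjTranspose, Matrix.diagonal_conjTranspose,
    Matrix.diagonal_mul_diagonal, ← Matrix.diagonal_one]
  congr 1
  funext i
  simp [Complex.mul_conj, Complex.normSq_eq_norm_sq, hd]

/-- An element of the commutant preserves weights. -/
lemma InCommutant.exists_perm {C : Matrix (Fin n → ι) (Fin n → ι) ℂ} (hC : InCommutant C)
    {I J : Fin n → ι} (h : C I J ≠ 0) : ∃ σ : Equiv.Perm (Fin n), J ∘ σ = I := by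
  apply exists_perm_comp_eq_of_card_fiber_eq
  intro r
  have hζ := Complex.isPrimitiveRoot_exp (n + 1) n.succ_ne_zero
  set ζ := Complex.exp (2 * Real.pi * Complex.I / (n + 1 : ℕ))
  have hU := hC _ (diagonal_mem_unitaryGroup (d := Function.update (fun _ => (1 : ℂ)) r ζ) (by
    intro i
    by_cases hi : i = r
    · subst hi; simpa using hζ.norm'_eq_one n.succ_ne_zero
    · simp [hi]))
  rw [tensorPow_diagonal] at hU
  have hIJ := congrFun (congrFun hU.eq I) J
  rw [Matrix.mul_diagonal, Matrix.diagonal_mul, mul_comm] at hIJ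
  have hpow := mul_right_cancel₀ h hIJ
  rw [prod_update_one_eq_pow, prod_update_one_eq_pow] at hpow
  have hle (K : Fin n → ι) : Fintype.card {s // K s = r} < n + 1 :=
    Nat.lt_succ_of_le ((Fintype.card_subtype_le _).trans_eq (Fintype.card_fin n))
  exact (hζ.pow_inj (hle J) (hle I) hpow).symm

lemma InCommutant.commute_diagonal {C : Matrix (Fin n → ι) (Fin n → ι) ℂ} (hC : InCommutant C)
    (d : ι → ℂ) : Commute C (tensorPow n (Matrix.diagonal d)) := by
  rw [tensorPow_diagonal]
  ext I J
  rw [Matrix.mul_diagonal, Matrix.diagonal_mul, mul_comm]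
  by_cases h : C I J = 0
  · simp [h]
  · obtain ⟨σ, rfl⟩ := hC.exists_perm h
    congr 1
    exact (Equiv.prod_comp σ fun s => d (J s)).symm

lemma InCommutant.commute_isHermitian {C : Matrix (Fin n → ι) (Fin n → ι) ℂ} (hC : InCommutant C)
    {A : Matrix ι ι ℂ} (hA : A.IsHermitian) : Commute C (tensorPow n A) := by
  rw [hA.spectral_theorem, Unitary.conjStarAlgAut_apply, tensorPow_mul, tensorPow_mul]
  refine ((hC _ (SetLike.coe_mem _)).mul_right (hC.commute_diagonal _)).mul_right (hC _ ?_)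
  exact (star hA.eigenvectorUnitary).2

lemma InCommutant.commute {C : Matrix (Fin n → ι) (Fin n → ι) ℂ} (hC : InCommutant C)
    (A : Matrix ι ι ℂ) : Commute C (tensorPow n A) := by
  obtain ⟨H, K, hH, hK, rfl⟩ : ∃ H K : Matrix ι ι ℂ, H.IsHermitian ∧ K.IsHermitian ∧
      H + Complex.I • K = A :=
    ⟨realPart A, imaginaryPart A, (realPart A).2, (imaginaryPart A).2,
      realPart_add_I_smul_imaginaryPart A⟩
  ext I J
  let T (I J : Fin n → ι) : ℂ[X] :=
    ∏ s, (Polynomial.C (H (I s) (J s)) + X * Polynomial.C (K (I s) (J s)))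
  have hT (z : ℂ) (I J : Fin n → ι) : (T I J).eval z = tensorPow n (H + z • K) I J := by
    simp [T, tensorPow, eval_prod, mul_comm z]
  let p : ℂ[X] := ∑ L, (Polynomial.C (C I L) * T L J - T I L * Polynomial.C (C L J))
  have hp (z : ℂ) : p.eval z =
      (C * tensorPow n (H + z • K)) I J - (tensorPow n (H + z • K) * C) I J := by
    simp [p, eval_finsetSum, hT, Matrix.mul_apply]
  have hp0 : p = 0 := by
    refine p.eq_zero_of_infinite_isRoot
      ((Set.infinite_range_of_injective Complex.ofReal_injective).mono ?_)
    rintro _ ⟨x, rfl⟩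
    have hx : (H + (x : ℂ) • K).IsHermitian := by
      refine hH.add ?_
      rw [Matrix.IsHermitian, Matrix.conjTranspose_smul, hK.eq]
      simp
    rw [Set.mem_ofPred_eq, IsRoot, hp, (hC.commute_isHermitian hx).eq, sub_self]
  exact sub_eq_zero.1 (by rw [← hp, hp0, eval_zero])

/-- An element of the commutant is a combination of permutations, with coefficients read off from
its column at an injective multi-index. -/
lemma InCommutant.apply_eq_sum {C : Matrix (Fin n → ι) (Fin n → ι) ℂ} (hC : InCommutant C)
    {e : Fin n → ι} (he : Function.Injective e) (I J : Fin n → ι) :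
    C I J = ∑ ρ : Equiv.Perm (Fin n), if I = J ∘ ρ then C (e ∘ ρ) e else 0 := by
  classical
  let A : Matrix ι ι ℂ := Matrix.of fun i j => if ∃ s, e s = j ∧ J s = i then 1 else 0
  have hA (i : ι) (s : Fin n) : A i (e s) = if i = J s then 1 else 0 := by
    simp [A, he.eq_iff, eq_comm]
  have hT (I : Fin n → ι) (v : Fin n → Fin n) :
      tensorPow n A I (e ∘ v) = if I = J ∘ v then 1 else 0 := by
    simp only [tensorPow, Matrix.of_apply, Function.comp_apply, hA, funext_iff]
    rw [Fintype.prod_boole]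
    congr
  have hcomm := congrFun (congrFun (hC.commute A).eq I) e
  have hl : (C * tensorPow n A) I e = C I J := by
    have h := hT (v := id)
    simp only [Function.comp_id] at h
    simp [Matrix.mul_apply, h]
  rw [← hl, hcomm, Matrix.mul_apply]
  have hinj : Function.Injective fun ρ : Equiv.Perm (Fin n) => e ∘ ρ := fun ρ τ h =>
    Equiv.ext fun s => he (congrFun h s)
  rw [← Finset.sum_subset (Finset.subset_univ (Finset.univ.image
    fun ρ : Equiv.Perm (Fin n) => e ∘ ρ)), Finset.sum_image hinj.injOn]
  · refine Finset.sum_congr rfl fun ρ _ => ?_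
    rw [hT]; split_ifs <;> simp
  · intro K _ hK
    by_cases h : C K e = 0
    · simp [h]
    · obtain ⟨σ, hσ⟩ := hC.exists_perm h
      exact (hK (Finset.mem_image.2 ⟨σ, Finset.mem_univ _, hσ⟩)).elim

end

open scoped Kronecker in
lemma sq_det_one_add_smul_map {ι : Type*} [Fintype ι] [DecidableEq ι] (A : Matrix ι ι ℂ) :
    (1 + (X : ℂ[X]) • A.map C).det ^ 2 =
      (1 + (X : ℂ[X]) • (A ⊗ₖ (1 : Matrix (Fin 2) (Fin 2) ℂ)).map C).det := by
  have h : (1 + (X : ℂ[X]) • A.map C) ⊗ₖ (1 : Matrix (Fin 2) (Fin 2) ℂ[X]) =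
      1 + (X : ℂ[X]) • (A ⊗ₖ (1 : Matrix (Fin 2) (Fin 2) ℂ)).map C := by
    rw [Matrix.add_kronecker, Matrix.one_kronecker_one, Matrix.smul_kronecker]
    congr 2
    ext ⟨i, a⟩ ⟨j, b⟩
    by_cases h : a = b <;> simp [h]
  rw [← h, Matrix.det_kronecker]
  simp

lemma factorial_mul_coeff_det_one_add {κ : Type*} [Fintype κ] [DecidableEq κ]
    (M : Matrix κ κ ℂ) (n : ℕ) :
    (n.factorial : ℂ) * (1 + (X : ℂ[X]) • M.map C).det.coeff n =
      ∑ i : Fin n → κ, (M.submatrix i i).det := by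
  classical
  have hinj : ∑ i : Fin n → κ, (M.submatrix i i).det =
      ∑ i : Fin n → κ with Function.Injective i, (M.submatrix i i).det := by
    rw [Finset.sum_filter_of_ne]
    intro i _ hi
    by_contra h
    simp only [Function.Injective, not_forall] at h
    obtain ⟨a, b, hab, hne⟩ := h
    exact hi (Matrix.det_zero_of_row_eq hne (by funext j; simp [hab]))
  rw [hinj, Matrix.coeff_det_one_add_X_smul_eq_sum_minors, Finset.mul_sum]
  trans ∑ s ∈ (Finset.univ : Finset κ).powersetCard n, ∑ e : Fin n ≃ s,
      (M.submatrix (Subtype.val ∘ e) (Subtype.val ∘ e)).det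
  · refine Finset.sum_congr rfl fun s hs => ?_
    have hcard : s.card = n := (Finset.mem_powersetCard.1 hs).2
    have e₀ : Fin n ≃ s := (finCongr hcard.symm).trans s.equivFin.symm
    have h (e : Fin n ≃ s) : (M.submatrix (Subtype.val ∘ e) (Subtype.val ∘ e)).det =
        (M.submatrix (Subtype.val : s → κ) Subtype.val).det := by
      rw [← Matrix.submatrix_submatrix, Matrix.det_submatrix_equiv_self]
    simp [h, Fintype.card_equiv e₀]
  · rw [Finset.sum_sigma']
    refine Finset.sum_bij (fun p _ => Subtype.val ∘ p.2) ?_ ?_ ?_ fun _ _ => rfl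
    · intro p _
      simpa using Subtype.val_injective.comp p.2.injective
    · rintro ⟨s, e⟩ _ ⟨t, f⟩ _ h
      have hs (u : Finset κ) (e : Fin n ≃ u) : Finset.univ.image (Subtype.val ∘ e) = u := by
        ext x
        simp only [Finset.mem_image, Finset.mem_univ, true_and, Function.comp_apply]
        exact ⟨by rintro ⟨a, rfl⟩; exact (e a).2, fun hx => ⟨e.symm ⟨x, hx⟩, by simp⟩⟩
      obtain rfl : s = t := by rw [← hs s e, ← hs t f]; exact congrArg (Finset.univ.image ·) h
      obtain rfl : e = f := Equiv.ext fun a => Subtype.ext (congrFun h a)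
      rfl
    · intro i hi
      have hi' : Function.Injective i := (Finset.mem_filter.1 hi).2
      let e : Fin n ≃ Finset.univ.image i := Equiv.ofBijective
        (fun a => ⟨i a, Finset.mem_image_of_mem i (Finset.mem_univ a)⟩)
        ⟨fun a b h => hi' (congrArg Subtype.val h), by
          rintro ⟨x, hx⟩
          obtain ⟨a, -, rfl⟩ := Finset.mem_image.1 hx
          exact ⟨a, rfl⟩⟩
      refine ⟨⟨Finset.univ.image i, e⟩, ?_, rfl⟩
      simp [Finset.mem_powersetCard, Finset.card_image_of_injective _ hi']

lemma charpolyRev_conjTranspose {κ : Type*} [Fintype κ] [DecidableEq κ] (A : Matrix κ κ ℂ) :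
    A.conjTranspose.charpolyRev = A.charpolyRev.map (starRingEnd ℂ) := by
  rw [Matrix.charpolyRev, Matrix.charpolyRev, ← Polynomial.coe_mapRingHom, RingHom.map_det,
    ← Matrix.det_transpose]
  congr 1
  ext1 i j
  simp [Matrix.one_apply, eq_comm, apply_ite]

/-- The functional equation: the coefficients of `det (1 + X • M)` are symmetric up to a phase when
`M` is unitary. -/
lemma norm_coeff_det_one_add_symm {κ : Type*} [Fintype κ] [DecidableEq κ] {M : Matrix κ κ ℂ}
    (hM : M ∈ Matrix.unitaryGroup κ ℂ) {j : ℕ} (hj : j ≤ Fintype.card κ) :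
    ‖(1 + (X : ℂ[X]) • M.map C).det.coeff (Fintype.card κ - j)‖ =
      ‖(1 + (X : ℂ[X]) • M.map C).det.coeff j‖ := by
  have hA : -M * (-M).conjTranspose = 1 := by
    simpa [Matrix.star_eq_conjTranspose] using Matrix.mem_unitaryGroup_iff.1 hM
  have hrev : (1 + (X : ℂ[X]) • M.map C).det = (-M).charpolyRev := by
    rw [Matrix.charpolyRev, Matrix.map_neg C (map_neg C), smul_neg, sub_neg_eq_add]
  rw [hrev]
  generalize -M = A at hA
  have hdet : ‖A.conjTranspose.det‖ = 1 := by
    have h := congrArg (fun B => ‖Matrix.det B‖) hA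
    simp only [Matrix.det_mul, Matrix.det_conjTranspose, norm_mul, norm_star, Matrix.det_one,
      norm_one] at h
    rw [Matrix.det_conjTranspose, norm_star]
    nlinarith [norm_nonneg A.det]
  have hA' : A.conjTranspose * A = 1 := mul_eq_one_comm.1 hA
  have hinv : A.conjTranspose⁻¹ = A := Matrix.inv_eq_right_inv hA'
  have hchar := Matrix.charpoly_inv A.conjTranspose (IsUnit.of_mul_eq_one _ hA')
  rw [hinv, charpolyRev_conjTranspose] at hchar
  have hcoeff : A.charpolyRev.coeff j = A.charpoly.coeff (Fintype.card κ - j) := by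
    rw [← Matrix.reverse_charpoly, coeff_reverse, Matrix.charpoly_natDegree_eq_dim,
      revAt_le hj]
  rw [hcoeff, hchar, show ((-1 : ℂ[X]) ^ Fintype.card κ) = C ((-1) ^ Fintype.card κ) by simp,
    ← C_mul, coeff_C_mul, coeff_map]
  simp [hdet, -Matrix.det_conjTranspose]

section
variable {R n : ℕ} {μ : Measure (Matrix.unitaryGroup (Fin R) ℂ)}

lemma integrable_tensorPow_mul_conj [IsFiniteMeasure μ] (I K J L : Fin n → Fin R) :
    Integrable (fun θ : Matrix.unitaryGroup (Fin R) ℂ =>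
      tensorPow n (θ : Matrix (Fin R) (Fin R) ℂ) I K *
        starRingEnd ℂ (tensorPow n (θ : Matrix (Fin R) (Fin R) ℂ) J L)) μ := by
  have hcont (I J : Fin n → Fin R) : Continuous fun θ : Matrix.unitaryGroup (Fin R) ℂ =>
      tensorPow n (θ : Matrix (Fin R) (Fin R) ℂ) I J := by
    simp only [tensorPow, Matrix.of_apply]
    exact continuous_finsetProd _ fun s _ => continuous_subtype_val.matrix_elem (I s) (J s)
  have hbound (θ : Matrix.unitaryGroup (Fin R) ℂ) (I J : Fin n → Fin R) :
      ‖tensorPow n (θ : Matrix (Fin R) (Fin R) ℂ) I J‖ ≤ 1 := by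
    rw [tensorPow, Matrix.of_apply, norm_prod]
    exact Finset.prod_le_one (fun _ _ => norm_nonneg _) fun s _ =>
      entry_norm_bound_of_unitary θ.2 (I s) (J s)
  refine Integrable.of_bound
    ((hcont I K).mul (Complex.continuous_conj.comp (hcont J L))).aestronglyMeasurable 1
    (Filter.Eventually.of_forall fun θ => ?_)
  rw [norm_mul, RCLike.norm_conj]
  exact mul_le_one₀ (hbound θ I K) (norm_nonneg _) (hbound θ J L)

/-- The mixed moments of the entries of tensor powers of a random unitary matrix. -/
noncomputable def momentMatrix (μ : Measure (Matrix.unitaryGroup (Fin R) ℂ))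
    (K L : Fin n → Fin R) : Matrix (Fin n → Fin R) (Fin n → Fin R) ℂ :=
  Matrix.of fun I J => ∫ θ : Matrix.unitaryGroup (Fin R) ℂ,
    tensorPow n (θ : Matrix (Fin R) (Fin R) ℂ) I K *
      starRingEnd ℂ (tensorPow n (θ : Matrix (Fin R) (Fin R) ℂ) J L) ∂μ

lemma inCommutant_momentMatrix [IsFiniteMeasure μ] [μ.IsMulLeftInvariant] (K L : Fin n → Fin R) :
    InCommutant (momentMatrix μ K L) := by
  intro U hU
  have hinv : tensorPow n U * momentMatrix μ K L * (tensorPow n U).conjTranspose =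
      momentMatrix μ K L := by
    ext I J
    have hpt (θ : Matrix.unitaryGroup (Fin R) ℂ) :
        tensorPow n (U * (θ : Matrix (Fin R) (Fin R) ℂ)) I K *
          starRingEnd ℂ (tensorPow n (U * (θ : Matrix (Fin R) (Fin R) ℂ)) J L) =
        ∑ B, ∑ A, tensorPow n U I A * starRingEnd ℂ (tensorPow n U J B) *
          (tensorPow n (θ : Matrix (Fin R) (Fin R) ℂ) A K *
            starRingEnd ℂ (tensorPow n (θ : Matrix (Fin R) (Fin R) ℂ) B L)) := by
      simp only [tensorPow_mul, Matrix.mul_apply, map_sum, map_mul]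
      rw [Finset.sum_mul_sum, Finset.sum_comm]
      exact Finset.sum_congr rfl fun B _ => Finset.sum_congr rfl fun A _ => by ring
    have hintegrable (A B : Fin n → Fin R) :=
      (integrable_tensorPow_mul_conj (μ := μ) A K B L).const_mul
        (tensorPow n U I A * starRingEnd ℂ (tensorPow n U J B))
    symm
    rw [momentMatrix, Matrix.of_apply,
      ← integral_mul_left_eq_self _ (⟨U, hU⟩ : Matrix.unitaryGroup (Fin R) ℂ)]
    simp only [Submonoid.coe_mul, hpt]
    rw [integral_finsetSum _ fun B _ => integrable_finsetSum _ fun A _ => hintegrable A B,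
      Matrix.mul_apply]
    refine Finset.sum_congr rfl fun B _ => ?_
    rw [integral_finsetSum _ fun A _ => hintegrable A B, Matrix.mul_apply, Finset.sum_mul]
    refine Finset.sum_congr rfl fun A _ => ?_
    rw [integral_const_mul, mul_right_comm]
    rfl
  have hunit : (tensorPow n U).conjTranspose * tensorPow n U = 1 := by
    rw [← tensorPow_conjTranspose, ← tensorPow_mul, ← Matrix.star_eq_conjTranspose,
      Matrix.mem_unitaryGroup_iff'.1 hU, tensorPow_one]
  calc momentMatrix μ K L * tensorPow n U
      = tensorPow n U * momentMatrix μ K L * (tensorPow n U).conjTranspose * tensorPow n U := by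
        rw [hinv]
    _ = tensorPow n U * momentMatrix μ K L := by rw [mul_assoc, hunit, mul_one]

lemma momentMatrix_comp_perm (I J K L : Fin n → Fin R) (σ : Equiv.Perm (Fin n)) :
    momentMatrix μ (K ∘ σ) L I J = momentMatrix μ K L (I ∘ (σ⁻¹ : Equiv.Perm (Fin n))) J := by
  simp only [momentMatrix, Matrix.of_apply]
  refine integral_congr_ae (Filter.Eventually.of_forall fun θ => ?_)
  simp only
  rw [← tensorPow_comp_perm _ I (K ∘ σ) σ⁻¹]
  congr 2
  funext s
  simp

lemma sum_momentMatrix_diag [IsProbabilityMeasure μ] (I J : Fin n → Fin R) :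
    ∑ K, momentMatrix μ K K I J = if I = J then 1 else 0 := by
  simp only [momentMatrix, Matrix.of_apply]
  rw [← integral_finsetSum _ fun K _ => integrable_tensorPow_mul_conj I K J K]
  have h (θ : Matrix.unitaryGroup (Fin R) ℂ) :
      ∑ K, tensorPow n (θ : Matrix (Fin R) (Fin R) ℂ) I K *
        starRingEnd ℂ (tensorPow n (θ : Matrix (Fin R) (Fin R) ℂ) J K) =
      if I = J then 1 else 0 := by
    have hunit : tensorPow n (θ : Matrix (Fin R) (Fin R) ℂ) *
        (tensorPow n (θ : Matrix (Fin R) (Fin R) ℂ)).conjTranspose = 1 := by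
      rw [← tensorPow_conjTranspose, ← tensorPow_mul, ← Matrix.star_eq_conjTranspose,
        Matrix.mem_unitaryGroup_iff.1 θ.2, tensorPow_one]
    rw [← Matrix.one_apply, ← hunit, Matrix.mul_apply]
    rfl
  simp [h]

/-- The trace of a permutation composed with a tensor power, that is, a product of traces of
powers indexed by the cycles of the permutation. -/
noncomputable def permTrace (A : Matrix (Fin R) (Fin R) ℂ) (σ : Equiv.Perm (Fin n)) : ℂ :=
  ∑ I, tensorPow n A (I ∘ σ) I

lemma permTrace_mul_conj (A : Matrix (Fin R) (Fin R) ℂ) (σ τ : Equiv.Perm (Fin n)) :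
    permTrace A σ * starRingEnd ℂ (permTrace A τ) =
      ∑ I, ∑ J, tensorPow n A (I ∘ σ) I * starRingEnd ℂ (tensorPow n A (J ∘ τ) J) := by
  rw [permTrace, permTrace, map_sum, Finset.sum_mul_sum]

lemma integrable_permTrace_mul_conj [IsFiniteMeasure μ] (σ τ : Equiv.Perm (Fin n)) :
    Integrable (fun θ : Matrix.unitaryGroup (Fin R) ℂ =>
      permTrace (θ : Matrix (Fin R) (Fin R) ℂ) σ *
        starRingEnd ℂ (permTrace (θ : Matrix (Fin R) (Fin R) ℂ) τ)) μ := by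
  simp only [permTrace_mul_conj]
  exact integrable_finsetSum _ fun I _ => integrable_finsetSum _ fun J _ =>
    integrable_tensorPow_mul_conj _ _ _ _

/-- In the stable range, the permutation traces have the same second moments as the class
functions on the symmetric group they come from. -/
lemma integral_permTrace_mul_conj [IsProbabilityMeasure μ] [μ.IsMulLeftInvariant] (hn : n ≤ R)
    (σ τ : Equiv.Perm (Fin n)) :
    ∫ θ : Matrix.unitaryGroup (Fin R) ℂ, permTrace (θ : Matrix (Fin R) (Fin R) ℂ) σ *
        starRingEnd ℂ (permTrace (θ : Matrix (Fin R) (Fin R) ℂ) τ) ∂μ =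
      ∑ ρ : Equiv.Perm (Fin n), if ρ * σ * ρ⁻¹ = τ then 1 else 0 := by
  have he : Function.Injective (Fin.castLE hn) := Fin.castLE_injective hn
  set e : Fin n → Fin R := Fin.castLE hn
  calc _ = ∑ I, ∑ J, momentMatrix μ I J (I ∘ σ) (J ∘ τ) := by
        simp only [permTrace_mul_conj]
        rw [integral_finsetSum _ fun I _ => integrable_finsetSum _ fun J _ =>
          integrable_tensorPow_mul_conj _ _ _ _]
        refine Finset.sum_congr rfl fun I _ => ?_
        rw [integral_finsetSum _ fun J _ => integrable_tensorPow_mul_conj _ _ _ _]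
        rfl
    _ = ∑ I : Fin n → Fin R, ∑ J : Fin n → Fin R, ∑ ρ : Equiv.Perm (Fin n),
          if I ∘ σ = (J ∘ τ) ∘ ρ then momentMatrix μ I J (e ∘ ρ) e else 0 := by
        refine Finset.sum_congr rfl fun I _ => Finset.sum_congr rfl fun J _ => ?_
        exact (inCommutant_momentMatrix I J).apply_eq_sum he _ _
    _ = ∑ ρ : Equiv.Perm (Fin n), ∑ J : Fin n → Fin R, ∑ I : Fin n → Fin R,
          if I = J ∘ (τ * ρ * σ⁻¹ : Equiv.Perm (Fin n)) then
            momentMatrix μ I J (e ∘ ρ) e else 0 := by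
        rw [Finset.sum_comm_cycle]
        refine Finset.sum_congr rfl fun ρ _ => ?_
        rw [Finset.sum_comm]
        refine Finset.sum_congr rfl fun J _ => Finset.sum_congr rfl fun I _ => if_congr ?_ rfl rfl
        simp only [funext_iff, Function.comp_apply, Equiv.Perm.mul_apply]
        exact ⟨fun h s => by simpa using h (σ⁻¹ s), fun h s => by simpa using h (σ s)⟩
    _ = ∑ ρ : Equiv.Perm (Fin n), ∑ J : Fin n → Fin R,
          momentMatrix μ J J (e ∘ ρ ∘ ((τ * ρ * σ⁻¹)⁻¹ : Equiv.Perm (Fin n))) e := by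
        refine Finset.sum_congr rfl fun ρ _ => Finset.sum_congr rfl fun J _ => ?_
        rw [Finset.sum_ite_eq', if_pos (Finset.mem_univ _), momentMatrix_comp_perm]
        rfl
    _ = _ := by
        refine Finset.sum_congr rfl fun ρ _ => ?_
        rw [sum_momentMatrix_diag]
        refine if_congr ?_ rfl rfl
        have h : e ∘ ρ ∘ ((τ * ρ * σ⁻¹)⁻¹ : Equiv.Perm (Fin n)) = e ↔
            ρ * (τ * ρ * σ⁻¹)⁻¹ = 1 := by
          simp only [funext_iff, Function.comp_apply, he.eq_iff, Equiv.ext_iff,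
            Equiv.Perm.mul_apply, Equiv.Perm.one_apply]
        rw [h, mul_eq_one_iff_eq_inv, inv_inv, eq_mul_inv_iff_mul_eq, mul_inv_eq_iff_eq_mul]

end

open scoped Kronecker in
lemma factorial_mul_coeff_sq {R n : ℕ} (A : Matrix (Fin R) (Fin R) ℂ) :
    (n.factorial : ℂ) * ((1 + (X : ℂ[X]) • A.map C).det ^ 2).coeff n =
      ∑ σ : Equiv.Perm (Fin n),
        (((Equiv.Perm.sign σ : ℤ) * cardFixedFun (Fin 2) σ : ℤ) : ℂ) * permTrace A σ := by
  rw [sq_det_one_add_smul_map, factorial_mul_coeff_det_one_add]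
  simp only [Matrix.det_apply', Matrix.submatrix_apply]
  rw [Finset.sum_comm]
  refine Finset.sum_congr rfl fun σ _ => ?_
  rw [← Finset.mul_sum, Int.cast_mul, mul_assoc]
  congr 1
  rw [← (Equiv.arrowProdEquivProdArrow (Fin n) (fun _ => Fin R) (fun _ => Fin 2)).symm.sum_comp,
    Fintype.sum_prod_type, permTrace, Finset.mul_sum]
  refine Finset.sum_congr rfl fun I _ => ?_
  have h (w : Fin n → Fin 2) : ∏ s, (A ⊗ₖ (1 : Matrix (Fin 2) (Fin 2) ℂ))
      ((Equiv.arrowProdEquivProdArrow (Fin n) (fun _ => Fin R) (fun _ => Fin 2)).symm (I, w) (σ s))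
      ((Equiv.arrowProdEquivProdArrow (Fin n) (fun _ => Fin R) (fun _ => Fin 2)).symm (I, w) s) =
      (if w ∘ σ = w then 1 else 0) * tensorPow n A (I ∘ σ) I := by
    simp only [Equiv.arrowProdEquivProdArrow, Equiv.coe_fn_symm_mk, Matrix.kroneckerMap_apply,
      Finset.prod_mul_distrib, Matrix.one_apply, funext_iff, Fintype.prod_boole]
    rw [mul_comm]
    congr
  simp only [h, ← Finset.sum_mul]
  simp [cardFixedFun, Fintype.card_subtype]

lemma sum_extPowTrace_eq_coeff (R n : ℕ) (θ : Matrix.unitaryGroup (Fin R) ℂ) :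
    ∑ x ∈ Finset.Nat.antidiagonalTuple 2 n, ∏ i, extPowTrace R θ (x i) =
      ((1 + (X : ℂ[X]) • (θ : Matrix (Fin R) (Fin R) ℂ).map C).det ^ 2).coeff n := by
  rw [Finset.Nat.antidiagonalTuple_two, Finset.sum_map, sq, coeff_mul]
  simp [extPowTrace, Fin.prod_univ_two]

lemma sum_sign_mul_cardFixedFun (n : ℕ) (ρ : Equiv.Perm (Fin n)) :
    ∑ σ : Equiv.Perm (Fin n), ∑ τ : Equiv.Perm (Fin n),
      ((Equiv.Perm.sign σ : ℤ) * cardFixedFun (Fin 2) σ) *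
        ((Equiv.Perm.sign τ : ℤ) * cardFixedFun (Fin 2) τ) *
          (if ρ * σ * ρ⁻¹ = τ then 1 else 0) = ((n + 3).choose 3 * n.factorial : ℕ) := by
  have h := sum_cardFixedFun (Fin 2 × Fin 2) n
  have hc : (Fintype.card (Fin 2 × Fin 2)).multichoose n = (n + 3).choose 3 := by
    rw [Nat.multichoose_eq, show Fintype.card (Fin 2 × Fin 2) + n - 1 = n + 3 by
      simp; omega, Nat.choose_symm_add]
  rw [hc] at h
  rw [← h, Nat.cast_sum]
  refine Finset.sum_congr rfl fun σ _ => ?_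
  simp only [mul_ite, mul_one, mul_zero, Finset.sum_ite_eq, Finset.mem_univ, if_true]
  have hs : (Equiv.Perm.sign (ρ * σ * ρ⁻¹)) = Equiv.Perm.sign σ := by
    rw [map_mul, map_mul, mul_right_comm, ← map_mul, mul_inv_cancel, map_one, one_mul]
  rw [cardFixedFun_conj, cardFixedFun_prod, hs, mul_mul_mul_comm, ← Units.val_mul,
    Int.units_mul_self]
  simp

lemma matrixIntegral_two_of_le {R n : ℕ} {μ : Measure (Matrix.unitaryGroup (Fin R) ℂ)}
    [IsProbabilityMeasure μ] [μ.IsMulLeftInvariant] (hn : n ≤ R) :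
    matrixIntegral 2 n R μ = (n + 3).choose 3 := by
  have hfact : (n.factorial : ℂ) ≠ 0 := Nat.cast_ne_zero.2 n.factorial_ne_zero
  let c (σ : Equiv.Perm (Fin n)) : ℤ := (Equiv.Perm.sign σ : ℤ) * cardFixedFun (Fin 2) σ
  have key (θ : Matrix.unitaryGroup (Fin R) ℂ) :
      ((‖∑ x ∈ Finset.Nat.antidiagonalTuple 2 n, ∏ i, extPowTrace R θ (x i)‖ ^ 2 : ℝ) : ℂ) =
      ((n.factorial : ℂ) ^ 2)⁻¹ * ∑ σ : Equiv.Perm (Fin n), ∑ τ : Equiv.Perm (Fin n),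
        ((c σ * c τ : ℤ) : ℂ) * (permTrace (θ : Matrix (Fin R) (Fin R) ℂ) σ *
          starRingEnd ℂ (permTrace (θ : Matrix (Fin R) (Fin R) ℂ) τ)) := by
    rw [sum_extPowTrace_eq_coeff, eq_inv_mul_iff_mul_eq₀ (pow_ne_zero 2 hfact)]
    have h := factorial_mul_coeff_sq (n := n) (θ : Matrix (Fin R) (Fin R) ℂ)
    generalize ((1 + (X : ℂ[X]) • (θ : Matrix (Fin R) (Fin R) ℂ).map C).det ^ 2).coeff n = z at h ⊢
    have hz : (n.factorial : ℂ) ^ 2 * ((‖z‖ ^ 2 : ℝ) : ℂ) =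
        (n.factorial * z) * starRingEnd ℂ (n.factorial * z) := by
      rw [map_mul, mul_mul_mul_comm, map_natCast, Complex.mul_conj, Complex.normSq_eq_norm_sq, sq]
    rw [hz, h, map_sum, Finset.sum_mul_sum]
    refine Finset.sum_congr rfl fun σ _ => Finset.sum_congr rfl fun τ _ => ?_
    simp only [c, map_mul, Int.cast_mul, map_intCast]
    ring
  have hintegrable (σ τ : Equiv.Perm (Fin n)) := (integrable_permTrace_mul_conj (μ := μ) σ τ).const_mul
    ((c σ * c τ : ℤ) : ℂ)
  apply Complex.ofReal_injective
  rw [matrixIntegral, ← integral_complex_ofReal]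
  simp only [key]
  rw [integral_const_mul, integral_finsetSum _ fun σ _ => integrable_finsetSum _ fun τ _ => hintegrable σ τ]
  simp only [integral_finsetSum _ fun τ _ => hintegrable _ τ, integral_const_mul,
    integral_permTrace_mul_conj hn]
  have hsum : ∑ σ : Equiv.Perm (Fin n), ∑ τ : Equiv.Perm (Fin n),
      c σ * c τ * ∑ ρ : Equiv.Perm (Fin n), (if ρ * σ * ρ⁻¹ = τ then 1 else 0) =
      (n.factorial ^ 2 * (n + 3).choose 3 : ℕ) := by
    simp only [Finset.mul_sum]
    rw [Finset.sum_comm_cycle]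
    simp only [c, sum_sign_mul_cardFixedFun, Finset.sum_const, Finset.card_univ, Fintype.card_perm,
      Fintype.card_fin]
    push_cast
    ring
  have hsum' := congrArg (Int.cast : ℤ → ℂ) hsum
  push_cast at hsum' ⊢
  rw [hsum', inv_mul_cancel_left₀ (pow_ne_zero 2 hfact)]

open scoped Kronecker in
lemma matrixIntegral_two_symm {R n : ℕ} (μ : Measure (Matrix.unitaryGroup (Fin R) ℂ))
    (hn : n ≤ 2 * R) : matrixIntegral 2 n R μ = matrixIntegral 2 (2 * R - n) R μ := by
  refine integral_congr_ae (Filter.Eventually.of_forall fun θ => ?_)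
  have hU : (θ : Matrix (Fin R) (Fin R) ℂ) ⊗ₖ (1 : Matrix (Fin 2) (Fin 2) ℂ) ∈
      Matrix.unitaryGroup (Fin R × Fin 2) ℂ :=
    Matrix.kronecker_mem_unitary θ.2 (one_mem _)
  have hcard : Fintype.card (Fin R × Fin 2) = 2 * R := by simp [mul_comm]
  have h := norm_coeff_det_one_add_symm hU (hcard ▸ hn)
  rw [hcard] at h
  simp only [sum_extPowTrace_eq_coeff, sq_det_one_add_smul_map, h]

theorem I_two_eq_choose (R : ℕ) (hR : 1 ≤ R)
    (μ : Measure (Matrix.unitaryGroup (Fin R) ℂ))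
    (hμ : μ.IsHaarMeasure) (hprob : IsProbabilityMeasure μ) :
    (∀ n : ℕ, n ≤ R → matrixIntegral 2 n R μ = Nat.choose (n + 3) 3) ∧
    (∀ n : ℕ, R < n → n < 2 * R → matrixIntegral 2 n R μ = Nat.choose (2 * R - n + 3) 3) := by
  refine ⟨fun n hn => matrixIntegral_two_of_le hn, fun n hn hn' => ?_⟩
  rw [matrixIntegral_two_symm μ hn'.le]
  exact matrixIntegral_two_of_le (by omega)
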